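/- arXiv:1811.08930 — 2 statements merged into one kernel-verified Lean document; each statement's English description precedes it below -/
import Mathlib

section
/- Let p be a prime, let Γ be a subgroup of the multiplicative group F_p^* with |Γ| < (p-1)/((p-1)^{1/4}+1), and let μ ∈ F_p^* be a nonzero element. Then |Γ ∩ (Γ + μ)| ≤ 4|Γ|^{2/3}, where Γ + μ = {γ + μ : γ ∈ Γ}. -/
/-!
Stepanov's method. Let `t = |Γ|`. Every point of `Γ ∩ (Γ + μ)` is a common solution of `x ^ t = 1`
and `(x - μ) ^ t = 1`. A combination of the products `X ^ a * X ^ (t * b) * (X - μ) ^ (t * c)`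
behaves, at such points and up to invertible factors, like a polynomial of degree about `a`, and so
do its derivatives. Hence few linear conditions on the coefficients make the combination vanish to
high order at all these points, while its degree stays bounded by a multiple of `t`.

The combination is not zero because a nonzero polynomial of degree less than the characteristic
vanishes at a nonzero point to order less than its number of monomials. With `b ≈ t ^ (1 / 3)`, the
choice `a < b ^ 2`, exponents of `X ^ t` and `(X - μ) ^ t` below `b`, and order of vanishing about
`b ^ 2 / 2` gives the bound; the characteristic has to be at least `b * t`, about `t ^ (4 / 3)`.
-/

open Polynomial
open scoped Nat

section
variable {R : Type*} [CommRing R]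

lemma mul_derivative_pow (f : R[X]) (n : ℕ) :
    f * derivative (f ^ n) = (n : R[X]) * derivative f * f ^ n := by
  cases n with
  | zero => simp
  | succ n =>
    rw [derivative_pow, C_eq_natCast, Nat.add_sub_cancel]
    ring

-- `hW` says that the logarithmic derivative of `W` is `V / L`.
theorem exists_pow_mul_iterate_derivative_mul_eq {L V W : R[X]} {d : ℕ}
    (hW : L * derivative W = V * W) (hL : L.natDegree ≤ d + 1) (hV : V.natDegree ≤ d)
    (P : R[X]) (n : ℕ) :
    ∃ T : R[X], T.natDegree ≤ P.natDegree + d * n ∧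
      L ^ n * derivative^[n] (P * W) = T * W := by
  induction n with
  | zero => exact ⟨P, by simp, by simp⟩
  | succ n ih =>
    obtain ⟨T, hdeg, hT⟩ := ih
    refine ⟨V * T + L * derivative T - (n : R[X]) * derivative L * T, ?_, ?_⟩
    · have hVT : (V * T).natDegree ≤ d + T.natDegree := natDegree_mul_le_of_le hV le_rfl
      have hLT : (L * derivative T).natDegree ≤ d + T.natDegree := by
        rcases eq_or_ne T.natDegree 0 with h0 | h0
        · simp [derivative_of_natDegree_zero h0]
        · have := natDegree_mul_le_of_le hL (natDegree_derivative_le T)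
          lia
      have hL' : ((n : R[X]) * derivative L * T).natDegree ≤ d + T.natDegree := by
        refine natDegree_mul_le_of_le ?_ le_rfl
        rw [← C_eq_natCast]
        exact (natDegree_C_mul_le _ _).trans ((natDegree_derivative_le L).trans (by lia))
      have := natDegree_sub_le_of_le (natDegree_add_le_of_degree_le hVT hLT) hL'
      lia
    · have hT' := congrArg derivative hT
      rw [derivative_mul, derivative_mul] at hT'
      rw [Function.iterate_succ_apply']
      linear_combination L * hT' - derivative^[n] (P * W) * mul_derivative_pow L n + T * hW
        - n * derivative L * hT

lemma mul_derivative_X_pow_mul_X_sub_C_pow (m : R) (e f : ℕ) :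
    X * (X - C m) * derivative (X ^ e * (X - C m) ^ f) =
      ((e : R[X]) * (X - C m) + (f : R[X]) * X) * (X ^ e * (X - C m) ^ f) := by
  have hX := mul_derivative_pow (X : R[X]) e
  have hXm := mul_derivative_pow (X - C m) f
  rw [derivative_X, mul_one] at hX
  rw [derivative_X_sub_C, mul_one] at hXm
  rw [derivative_mul]
  linear_combination (X - C m) ^ (f + 1) * hX + X ^ (e + 1) * hXm

theorem exists_ne_zero_forall_sum_smul_eq_zero_of_degree_lt [Nontrivial R] {ι κ : Type*}
    [Fintype ι] [Fintype κ] {d : κ → ℕ} {T : κ → ι → R[X]} (hT : ∀ k i, (T k i).degree < d k)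
    (hcard : ∑ k, d k < Fintype.card ι) :
    ∃ v : ι → R, v ≠ 0 ∧ ∀ k, ∑ i, v i • T k i = 0 := by
  let u : ι → ∀ k, degreeLT R (d k) := fun i k ↦ ⟨T k i, mem_degreeLT.mpr (hT k i)⟩
  have hrank : Module.finrank R (∀ k, degreeLT R (d k)) = ∑ k, d k := by
    simp [Module.finrank_pi_fintype, Module.finrank_eq_card_basis (degreeLT.basis R _)]
  have hdep : ¬ LinearIndependent R u := fun h ↦
    (h.fintype_card_le_finrank.trans_eq hrank).not_gt hcard
  obtain ⟨v, hv, i, hi⟩ := Fintype.not_linearIndependent_iff.mp hdep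
  refine ⟨v, Function.ne_iff.mpr ⟨i, hi⟩, fun k ↦ ?_⟩
  simpa [u] using congrArg Subtype.val (congrFun hv k)

lemma cast_factorial_ne_zero_of_le {k n : ℕ} (hkn : k ≤ n) (hn : (n ! : R) ≠ 0) :
    (k ! : R) ≠ 0 := by
  obtain ⟨c, hc⟩ := Nat.factorial_dvd_factorial hkn
  rw [hc, Nat.cast_mul] at hn
  exact left_ne_zero_of_mul hn

lemma card_support_le_card_support_X_mul (P : R[X]) :
    P.support.card ≤ (X * P).support.card :=
  Finset.card_le_card_of_injOn (· + 1) (fun k hk ↦ by simpa using hk)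
    (add_left_injective 1).injOn

lemma card_support_derivative_lt {Q : R[X]} (h0 : Q.coeff 0 ≠ 0) :
    (derivative Q).support.card < Q.support.card := by
  refine (Finset.card_le_card_of_injOn (t := Q.support.erase 0) (· + 1) (fun k hk ↦ ?_)
    (add_left_injective 1).injOn).trans_lt (Finset.card_erase_lt_of_mem (mem_support_iff.mpr h0))
  simpa using of_mem_support_derivative hk

end

section
variable {R : Type*} [CommRing R] [IsDomain R]

lemma cast_factorial_ne_zero_of_lt_ringChar {n : ℕ} (h : ringChar R = 0 ∨ n < ringChar R) :
    (n ! : R) ≠ 0 := by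
  rw [Ne, ringChar.spec]
  rcases CharP.char_is_prime_or_zero R (ringChar R) with hp | h0
  · rw [hp.dvd_factorial]
    have := hp.pos
    lia
  · simp [h0, Nat.factorial_ne_zero]

-- Dividing by `X` preserves the multiplicity at `m`. If the constant term is nonzero,
-- differentiating removes a monomial and lowers the multiplicity by at most one.
theorem rootMultiplicity_lt_card_support {m : R} (hm : m ≠ 0) {Q : R[X]} (hQ : Q ≠ 0)
    (hfac : (Q.natDegree ! : R) ≠ 0) : Q.rootMultiplicity m < Q.support.card := by
  induction hn : Q.natDegree generalizing Q with
  | zero =>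
    rw [eq_C_of_natDegree_eq_zero hn] at hQ ⊢
    rw [rootMultiplicity_C]
    exact Finset.card_pos.mpr (nonempty_support_iff.mpr hQ)
  | succ n ih =>
    rw [hn] at hfac
    have hfac' : (n ! : R) ≠ 0 := cast_factorial_ne_zero_of_le n.le_succ hfac
    by_cases h0 : Q.coeff 0 = 0
    · obtain ⟨P, rfl⟩ := X_dvd_iff.mpr h0
      have hP : P.natDegree = n := by
        simpa [natDegree_X_mul (right_ne_zero_of_mul hQ)] using hn
      have hX : rootMultiplicity m (X : R[X]) = 0 := rootMultiplicity_eq_zero (by simpa using hm)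
      rw [rootMultiplicity_mul hQ, hX, zero_add]
      exact (ih (right_ne_zero_of_mul hQ) (hP ▸ hfac') hP).trans_le
        (card_support_le_card_support_X_mul P)
    · have hcoeff : (derivative Q).coeff n ≠ 0 := by
        rw [coeff_derivative, ← hn, coeff_natDegree]
        rw [Nat.factorial_succ, Nat.cast_mul] at hfac
        exact mul_ne_zero (leadingCoeff_ne_zero.mpr hQ) (by exact_mod_cast left_ne_zero_of_mul hfac)
      have hQ' : derivative Q ≠ 0 := fun h ↦ hcoeff (by simp [h])
      have hdeg : (derivative Q).natDegree = n :=
        le_antisymm ((natDegree_derivative_le Q).trans (by lia)) (le_natDegree_of_ne_zero hcoeff)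
      have hmult := rootMultiplicity_sub_one_le_derivative_rootMultiplicity_of_ne_zero Q m hQ'
      have := ih hQ' (hdeg ▸ hfac') hdeg
      have := card_support_derivative_lt h0
      lia

theorem eq_zero_of_sum_mul_X_sub_C_pow_eq_zero {m : R} (hm : m ≠ 0) {t N : ℕ} {Q : Fin N → R[X]}
    (hfac : ∀ c, ((Q c).natDegree ! : R) ≠ 0) (hcard : ∀ c, (Q c).support.card ≤ t)
    (hsum : ∑ c, Q c * (X - C m) ^ (t * c : ℕ) = 0) : Q = 0 := by
  induction N with
  | zero => exact Subsingleton.elim _ _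
  | succ N ih =>
    have hsum' : Q 0 + (X - C m) ^ t * ∑ c : Fin N, Q c.succ * (X - C m) ^ (t * c : ℕ) = 0 := by
      rw [← hsum, Fin.sum_univ_succ, Finset.mul_sum]
      congr 1
      · simp
      · refine Finset.sum_congr rfl fun c _ ↦ ?_
        rw [Fin.val_succ]
        ring
    have hQ0 : Q 0 = 0 := by
      by_contra hne
      have hdvd : (X - C m) ^ t ∣ Q 0 :=
        (dvd_add_left (dvd_mul_right _ _)).mp (hsum' ▸ dvd_zero _)
      exact (((le_rootMultiplicity_iff hne).mpr hdvd).trans_lt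
        (rootMultiplicity_lt_card_support hm hne (hfac 0))).not_ge (hcard 0)
    rw [hQ0, zero_add] at hsum'
    have htail : (fun c : Fin N ↦ Q c.succ) = 0 := ih (fun c ↦ hfac c.succ) (fun c ↦ hcard c.succ)
      ((mul_eq_zero.mp hsum').resolve_left (pow_ne_zero _ (X_sub_C_ne_zero m)))
    funext c
    exact Fin.cases hQ0 (congrFun htail) c

theorem linearIndependent_X_pow_mul_X_sub_C_pow {ι : Type*} [Fintype ι] {e : ι → ℕ}
    (he : Function.Injective e) (hfac : ∀ i, ((e i)! : R) ≠ 0) {m : R} (hm : m ≠ 0) {t : ℕ}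
    (hcard : Fintype.card ι ≤ t) (N : ℕ) :
    LinearIndependent R fun x : ι × Fin N ↦ X ^ e x.1 * (X - C m) ^ (t * x.2 : ℕ) := by
  classical
  rw [Fintype.linearIndependent_iff]
  intro v hv
  set Q : Fin N → R[X] := fun c ↦ ∑ i, monomial (e i) (v (i, c)) with hQ
  have hcoeff (c : Fin N) (i : ι) : (Q c).coeff (e i) = v (i, c) := by
    simp [hQ, coeff_monomial, he.eq_iff]
  have hsupp (c : Fin N) : (Q c).support ⊆ Finset.univ.image e := by
    intro k hk
    rw [mem_support_iff, finsetSum_coeff] at hk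
    obtain ⟨i, -, hi⟩ := Finset.exists_ne_zero_of_sum_ne_zero hk
    rw [coeff_monomial] at hi
    exact Finset.mem_image.mpr ⟨i, Finset.mem_univ i, (ite_ne_right_iff.mp hi).1⟩
  have hdeg (c : Fin N) : ((Q c).natDegree ! : R) ≠ 0 := by
    rcases eq_or_ne (Q c) 0 with h0 | h0
    · simp [h0]
    · obtain ⟨i, -, hi⟩ := Finset.mem_image.mp (hsupp c (natDegree_mem_support_of_nonzero h0))
      exact hi ▸ hfac i
  have hsum : ∑ c, Q c * (X - C m) ^ (t * c : ℕ) = 0 := by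
    rw [← hv, Fintype.sum_prod_type_right]
    simp only [hQ, Finset.sum_mul, ← smul_X_eq_monomial, smul_mul_assoc]
  have hzero : Q = 0 := eq_zero_of_sum_mul_X_sub_C_pow_eq_zero hm hdeg
    (fun c ↦ (Finset.card_le_card (hsupp c)).trans (Finset.card_image_le.trans hcard)) hsum
  rintro ⟨i, c⟩
  rw [← hcoeff, hzero, Pi.zero_apply, coeff_zero]

theorem card_mul_le_natDegree_of_le_rootMultiplicity {f : R[X]} {S : Finset R} {D : ℕ}
    (hS : ∀ x ∈ S, D ≤ f.rootMultiplicity x) : S.card * D ≤ f.natDegree := by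
  classical
  have hle : D • S.val ≤ f.roots := by
    rw [Multiset.le_iff_count]
    intro x
    rw [Multiset.count_nsmul, count_roots, Multiset.count_eq_of_nodup S.nodup]
    split_ifs with hx
    · simpa using hS x hx
    · simp
  calc S.card * D = (D • S.val).card := by rw [Multiset.card_nsmul, mul_comm]; rfl
    _ ≤ f.roots.card := Multiset.card_le_card hle
    _ ≤ f.natDegree := card_roots' f

end

/-- The monomials in `X`, `X ^ t` and `(X - m) ^ t` whose combinations are the auxiliary polynomials
of Stepanov's method; the exponents of the three are below `A`, `B` and `B`. -/
noncomputable def stepanovMonomial {R : Type*} [CommRing R] (A B t : ℕ) (m : R)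
    (i : (Fin A × Fin B) × Fin B) : R[X] :=
  X ^ (i.1.1 + t * i.1.2 : ℕ) * (X - C m) ^ (t * i.2 : ℕ)

section
variable {R : Type*} [CommRing R] {A B D t : ℕ}

lemma natDegree_stepanovMonomial_le (m : R) (i : (Fin A × Fin B) × Fin B) :
    (stepanovMonomial A B t m i).natDegree ≤ A + 2 * ((B - 1) * t) := by
  have hdeg : (stepanovMonomial A B t m i).natDegree ≤ i.1.1 + t * i.1.2 + t * i.2 := by
    unfold stepanovMonomial
    compute_degree
  have hle (b : Fin B) : t * b ≤ (B - 1) * t := by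
    rw [mul_comm]
    exact Nat.mul_le_mul_right t (Nat.le_sub_one_of_lt b.2)
  have := hle i.1.2
  have := hle i.2
  lia

theorem exists_eval_iterate_derivative_stepanovMonomial (m : R) (n : ℕ)
    (i : (Fin A × Fin B) × Fin B) :
    ∃ T : R[X], T.degree < (A + n : ℕ) ∧ ∀ x : R, x ^ t = 1 → (x - m) ^ t = 1 →
      (x * (x - m)) ^ n * (derivative^[n] (stepanovMonomial A B t m i)).eval x = T.eval x := by
  obtain ⟨⟨a, b⟩, c⟩ := i
  obtain ⟨T, hdeg, hT⟩ := exists_pow_mul_iterate_derivative_mul_eq (d := 1)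
    (mul_derivative_X_pow_mul_X_sub_C_pow m (t * b) (t * c))
    (by compute_degree) (by compute_degree) (X ^ (a : ℕ)) n
  refine ⟨T, ?_, fun x hx hxm ↦ ?_⟩
  · refine degree_le_natDegree.trans_lt (Nat.cast_lt.mpr ?_)
    have := natDegree_X_pow_le (R := R) a
    lia
  · have hmonomial : stepanovMonomial A B t m ((a, b), c) =
        X ^ (a : ℕ) * (X ^ (t * b : ℕ) * (X - C m) ^ (t * c : ℕ)) := by
      rw [stepanovMonomial, pow_add, mul_assoc]
    rw [← hmonomial] at hT
    simpa [pow_mul, hx, hxm] using congrArg (eval x) hT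

variable [IsDomain R]

theorem linearIndependent_stepanovMonomial {m : R} (hm : m ≠ 0) (hABt : A * B ≤ t)
    (hfac : ((B * t - 1)! : R) ≠ 0) : LinearIndependent R (stepanovMonomial A B t m) := by
  have hAt (ab : Fin A × Fin B) : (ab.1 : ℕ) < t :=
    ab.1.2.trans_le ((Nat.le_mul_of_pos_right A ab.2.pos).trans hABt)
  refine linearIndependent_X_pow_mul_X_sub_C_pow (ι := Fin A × Fin B)
    (e := fun ab ↦ ab.1 + t * ab.2) ?_ (fun ab ↦ cast_factorial_ne_zero_of_le ?_ hfac) hm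
    (by simpa using hABt) B
  · intro ab ab' h
    have hmod := congrArg (· % t) h
    have hdiv := congrArg (· / t) h
    simp only [Nat.add_mul_mod_self_left, Nat.mod_eq_of_lt (hAt _)] at hmod
    simp only [Nat.add_mul_div_left _ _ (Nat.zero_lt_of_lt (hAt ab)), Nat.div_eq_of_lt (hAt _),
      zero_add] at hdiv
    exact Prod.ext (Fin.ext hmod) (Fin.ext hdiv)
  · refine Nat.le_sub_one_of_lt ?_
    calc ab.1 + t * ab.2 < t + t * ab.2 := Nat.add_lt_add_right (hAt ab) _
      _ = (ab.2 + 1) * t := by ring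
      _ ≤ B * t := Nat.mul_le_mul_right t ab.2.2

theorem exists_natDegree_le_forall_le_rootMultiplicity {m : R} (hm : m ≠ 0) (ht : 0 < t)
    (hABt : A * B ≤ t) (hD : D ≤ B * t) (hfac : ((B * t - 1)! : R) ≠ 0)
    (hcount : ∑ n ∈ Finset.range D, (A + n) < A * B * B) :
    ∃ f : R[X], f ≠ 0 ∧ f.natDegree ≤ A + 2 * ((B - 1) * t) ∧
      ∀ x : R, x ^ t = 1 → (x - m) ^ t = 1 → D ≤ f.rootMultiplicity x := by
  choose T hdeg hT using fun n ↦
    exists_eval_iterate_derivative_stepanovMonomial (A := A) (B := B) (t := t) m n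
  obtain ⟨v, hv, hvT⟩ := exists_ne_zero_forall_sum_smul_eq_zero_of_degree_lt
    (T := fun n : Fin D ↦ T n) (fun n ↦ hdeg n) (by simpa [Finset.sum_range] using hcount)
  have hf : ∑ i, v i • stepanovMonomial A B t m i ≠ 0 := fun h ↦
    hv (funext (Fintype.linearIndependent_iff.mp
      (linearIndependent_stepanovMonomial hm hABt hfac) v h))
  refine ⟨_, hf, natDegree_sum_le_of_forall_le _ _ fun i _ ↦
    (natDegree_smul_le _ _).trans (natDegree_stepanovMonomial_le m i), fun x hx hxm ↦ ?_⟩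
  have hx0 : x * (x - m) ≠ 0 :=
    mul_ne_zero (IsUnit.of_pow_eq_one hx ht.ne').ne_zero (IsUnit.of_pow_eq_one hxm ht.ne').ne_zero
  have hroot (n : ℕ) (hn : n < D) :
      (derivative^[n] (∑ i, v i • stepanovMonomial A B t m i)).IsRoot x := by
    refine (mul_eq_zero.mp ?_).resolve_left (pow_ne_zero n hx0)
    calc (x * (x - m)) ^ n * (derivative^[n] (∑ i, v i • stepanovMonomial A B t m i)).eval x
        = (∑ i, v i • T n i).eval x := by
          simp only [iterate_derivative_sum, iterate_derivative_smul, eval_finsetSum, eval_smul,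
            smul_eq_mul, Finset.mul_sum, ← hT n _ x hx hxm, mul_left_comm]
      _ = 0 := by rw [hvT ⟨n, hn⟩, eval_zero]
  cases D with
  | zero => exact Nat.zero_le _
  | succ D =>
    exact lt_rootMultiplicity_of_isRoot_iterate_derivative_of_mem_nonZeroDivisors hf
      (fun n hn ↦ hroot n (Nat.lt_succ_of_le hn))
      (mem_nonZeroDivisors_of_ne_zero (cast_factorial_ne_zero_of_le (Nat.le_sub_one_of_lt hD) hfac))

end

lemma sum_range_add_lt_mul_self {c D : ℕ} (hc : 2 ≤ c) (hD : 2 * D ≤ c + 1) :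
    ∑ n ∈ Finset.range D, (c + n) < c * c := by
  have hterm : ∀ n ∈ Finset.range D, 2 * (c + n) ≤ 3 * c - 1 := fun n hn ↦ by
    have := Finset.mem_range.mp hn
    lia
  have hsum : 2 * ∑ n ∈ Finset.range D, (c + n) ≤ D * (3 * c - 1) := by
    rw [Finset.mul_sum]
    simpa using Finset.sum_le_card_nsmul _ _ _ hterm
  obtain ⟨k, rfl⟩ := Nat.exists_eq_add_of_le hc
  have : 3 * (2 + k) - 1 = 3 * k + 5 := by lia
  rw [this] at hsum
  nlinarith

lemma le_four_mul_sq_of_mul_sq_le {b : ℕ} {N s : ℝ} (hb : 0 < b) (hbs : b ≤ s) (hsb : s ≤ b + 1)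
    (hN : N * b ^ 2 ≤ 2 * b ^ 2 + 4 * ((b - 1) * s ^ 3)) : N ≤ 4 * s ^ 2 := by
  have hb1 : (1 : ℝ) ≤ b := by exact_mod_cast hb
  refine le_of_mul_le_mul_right ?_ (by positivity : (0 : ℝ) < b ^ 2)
  calc N * b ^ 2 ≤ 2 * b ^ 2 + 4 * ((b - 1) * s ^ 3) := hN
    _ = 2 * b ^ 2 + 4 * ((b - 1) * s) * s ^ 2 := by ring
    _ ≤ 2 * s ^ 2 + 4 * ((b - 1) * (b + 1)) * s ^ 2 := by gcongr
    _ ≤ 4 * s ^ 2 * b ^ 2 := by nlinarith [sq_nonneg s]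

lemma rpow_four_thirds_le_of_lt_div {x y : ℝ} (hx : 0 < x) (hy : 0 ≤ y)
    (h : y < x / (x ^ ((1 : ℝ) / 4) + 1)) : y ^ ((4 : ℝ) / 3) ≤ x := by
  calc y ^ ((4 : ℝ) / 3) ≤ (x / x ^ ((1 : ℝ) / 4)) ^ ((4 : ℝ) / 3) := by
        gcongr
        exact h.le.trans (by gcongr; linarith)
    _ = x := by
        rw [← Real.rpow_one_sub' hx.le (by norm_num), ← Real.rpow_mul hx.le]
        norm_num

section
variable {R : Type*} [CommRing R] [IsDomain R]

lemma card_le_of_pow_eq_one {t : ℕ} (ht : 0 < t) {S : Finset R} (hS : ∀ x ∈ S, x ^ t = 1) :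
    S.card ≤ t := by
  have hroots : S.val ⊆ nthRoots t 1 := fun x hx ↦ (mem_nthRoots ht).mpr (hS x hx)
  exact (card_le_degree_of_subset_roots hroots).trans_eq natDegree_X_pow_sub_C

theorem card_mul_sq_le_of_pow_eq_one {m : R} (hm : m ≠ 0) {b t : ℕ} (hb : 2 ≤ b) (hbt : b ^ 3 ≤ t)
    (hfac : ((b * t - 1)! : R) ≠ 0) {S : Finset R}
    (hS : ∀ x ∈ S, x ^ t = 1 ∧ (x - m) ^ t = 1) :
    S.card * b ^ 2 ≤ 2 * b ^ 2 + 4 * ((b - 1) * t) := by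
  have hDt : (b ^ 2 + 1) / 2 ≤ b * t := by
    have : b ^ 2 + 1 ≤ 2 * (b * b ^ 3) := by nlinarith [Nat.pow_le_pow_left hb 2]
    have := Nat.mul_le_mul_left b hbt
    lia
  have hcount : ∑ n ∈ Finset.range ((b ^ 2 + 1) / 2), (b ^ 2 + n) < b ^ 2 * b * b := by
    rw [mul_assoc, ← sq]
    exact sum_range_add_lt_mul_self (by nlinarith) (Nat.mul_div_le _ 2)
  obtain ⟨f, -, hdeg, hmult⟩ := exists_natDegree_le_forall_le_rootMultiplicity hm
    ((by positivity : 0 < b ^ 3).trans_le hbt) (by rwa [← pow_succ]) hDt hfac hcount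
  have hcard : S.card * ((b ^ 2 + 1) / 2) ≤ b ^ 2 + 2 * ((b - 1) * t) :=
    (card_mul_le_natDegree_of_le_rootMultiplicity fun x hx ↦
      hmult x (hS x hx).1 (hS x hx).2).trans hdeg
  calc S.card * b ^ 2 ≤ S.card * (2 * ((b ^ 2 + 1) / 2)) := Nat.mul_le_mul_left _ (by lia)
    _ = 2 * (S.card * ((b ^ 2 + 1) / 2)) := by ring
    _ ≤ 2 * b ^ 2 + 4 * ((b - 1) * t) := by lia

theorem card_le_four_mul_rpow_of_pow_eq_one {m : R} (hm : m ≠ 0) {t : ℕ} (ht : 0 < t)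
    (hchar : ringChar R = 0 ∨ (t : ℝ) ^ ((4 : ℝ) / 3) ≤ ringChar R) {S : Finset R}
    (hS : ∀ x ∈ S, x ^ t = 1 ∧ (x - m) ^ t = 1) :
    (S.card : ℝ) ≤ 4 * (t : ℝ) ^ ((2 : ℝ) / 3) := by
  set s : ℝ := (t : ℝ) ^ ((1 : ℝ) / 3) with hs
  have hs_pow (k : ℕ) : (t : ℝ) ^ ((k : ℝ) / 3) = s ^ k := by
    rw [hs, ← Real.rpow_mul_natCast t.cast_nonneg, one_div_mul_eq_div]
  have hs0 : 0 < s := by positivity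
  have hst : s ^ 3 = t := by rw [← hs_pow]; norm_num
  rw [show (t : ℝ) ^ ((2 : ℝ) / 3) = s ^ 2 from mod_cast hs_pow 2]
  rw [show (t : ℝ) ^ ((4 : ℝ) / 3) = s ^ 4 from mod_cast hs_pow 4] at hchar
  rcases lt_or_ge s 2 with hs2 | hs2
  · have hcard : (S.card : ℝ) ≤ t := mod_cast card_le_of_pow_eq_one ht fun x hx ↦ (hS x hx).1
    nlinarith [sq_nonneg s]
  · set b := ⌊s⌋₊
    have hb : 2 ≤ b := Nat.le_floor hs2
    have hbs : (b : ℝ) ≤ s := Nat.floor_le hs0.le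
    have hbt : b ^ 3 ≤ t := by
      rw [← Nat.cast_le (α := ℝ), ← hst, Nat.cast_pow]
      gcongr
    have hfac : ((b * t - 1)! : R) ≠ 0 := by
      refine cast_factorial_ne_zero_of_lt_ringChar (hchar.imp_right fun h ↦ ?_)
      refine (Nat.sub_one_lt (by positivity)).trans_le ?_
      rw [← Nat.cast_le (α := ℝ), Nat.cast_mul, ← hst]
      calc (b : ℝ) * s ^ 3 ≤ s * s ^ 3 := by gcongr
        _ = s ^ 4 := by ring
        _ ≤ ringChar R := h
    refine le_four_mul_sq_of_mul_sq_le (by lia) hbs (Nat.lt_floor_add_one s).le ?_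
    have := card_mul_sq_le_of_pow_eq_one hm hb hbt hfac hS
    rw [hst, ← Nat.cast_pred (by lia)]
    exact_mod_cast this

theorem garcia_voloch_general (Γ : Subgroup Rˣ) [Finite Γ] {m : R} (hm : m ≠ 0)
    (hchar : ringChar R = 0 ∨ (Nat.card Γ : ℝ) ^ ((4 : ℝ) / 3) ≤ ringChar R) :
    (Nat.card {x : R | (∃ γ ∈ Γ, x = (γ : Rˣ)) ∧ ∃ γ ∈ Γ, x = ((γ : Rˣ) : R) + m} : ℝ) ≤
      4 * (Nat.card Γ : ℝ) ^ ((2 : ℝ) / 3) := by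
  have hpow {γ : Rˣ} (hγ : γ ∈ Γ) : (γ : R) ^ Nat.card Γ = 1 := by
    rw [← Units.val_pow_eq_pow_val, orderOf_dvd_iff_pow_eq_one.mp (Γ.orderOf_dvd_natCard hγ),
      Units.val_one]
  set Z := {x : R | (∃ γ ∈ Γ, x = (γ : Rˣ)) ∧ ∃ γ ∈ Γ, x = ((γ : Rˣ) : R) + m}
  have hZ : Z.Finite := ((Γ : Set Rˣ).toFinite.image Units.val).subset fun x hx ↦ by
    obtain ⟨⟨γ, hγ, rfl⟩, -⟩ := hx
    exact ⟨γ, hγ, rfl⟩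
  rw [Nat.card_coe_set_eq, Set.ncard_eq_toFinset_card Z hZ]
  refine card_le_four_mul_rpow_of_pow_eq_one hm Nat.card_pos hchar fun x hx ↦ ?_
  obtain ⟨⟨γ, hγ, hxγ⟩, δ, hδ, hxδ⟩ := hZ.mem_toFinset.mp hx
  exact ⟨hxγ ▸ hpow hγ, by rw [hxδ, add_sub_cancel_right, hpow hδ]⟩

end

/-- Garcia–Voloch bound: for a subgroup `Γ` of `F_p^*` with
`|Γ| < (p-1)/((p-1)^(1/4)+1)` and any nonzero `μ`, one has
`|Γ ∩ (Γ + μ)| ≤ 4 |Γ|^(2/3)`. -/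
theorem garcia_voloch (p : ℕ) [Fact p.Prime] (Γ : Subgroup (ZMod p)ˣ)
    (μ : (ZMod p)ˣ)
    (hΓ : (Nat.card Γ : ℝ) < ((p : ℝ) - 1) / (((p : ℝ) - 1) ^ ((1 : ℝ) / 4) + 1)) :
    (Nat.card {x : ZMod p | (∃ γ ∈ Γ, x = (γ : (ZMod p)ˣ)) ∧
        (∃ γ ∈ Γ, x = ((γ : (ZMod p)ˣ) : ZMod p) + (μ : ZMod p))} : ℝ) ≤
      4 * (Nat.card Γ : ℝ) ^ ((2 : ℝ) / 3) := by
  have hp : (0 : ℝ) < p - 1 := sub_pos.mpr (mod_cast (Fact.out : p.Prime).one_lt)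
  have hcard := rpow_four_thirds_le_of_lt_div hp (Nat.cast_nonneg _) hΓ
  refine garcia_voloch_general Γ μ.ne_zero (.inr ?_)
  rw [ZMod.ringChar_zmod_n]
  linarith
end

section
/- Let p be a prime, Γ ⊆ F_p^* a subgroup, and let μ_1, …, μ_n ∈ F_p^* be pairwise distinct nonzero elements of F_p with n ≥ 2. Suppose that 32·n·2^{20 n log(n+1)} ≤ |Γ| and 4n|Γ|(|Γ|^{1/(2n+1)} + 1) ≤ p. Then |Γ ∩ (Γ + μ_1) ∩ … ∩ (Γ + μ_n)| ≤ 4(n+1)(|Γ|^{1/(2n+1)} + 1)^{n+1}. -/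
/-!
The proof is Stepanov's method. Put `t = |Γ|` and let `S` be the intersection, so that
`(x - ν) ^ t = 1` for `x ∈ S` and each of the `n + 1` shifts `ν` (namely `0` and the `μ i`). Choose
an auxiliary polynomial `Ψ = ∑ P_e f_e`, where `f_e` is a product of powers of the `(X - ν) ^ t` and
`deg P_e < A`. With `F = ∏ (X - ν)`, the logarithmic derivative of `f_e` times `F` is a polynomial
of degree at most `n`, so `F ^ k (P_e f_e)⁽ᵏ⁾` is `f_e` times a polynomial of degree less than
`A + n k`; as `f_e = 1` on `S`, the vanishing of `Ψ` to order `D` on `S` follows from about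
`D (A + n D)` linear equations in the coefficients of the `P_e`. A nonzero solution gives
`|S| D ≤ deg Ψ` as soon as `Ψ ≠ 0`.

To see that `Ψ ≠ 0`, peel off one shift `ν` at a time: a relation among the `f_e` makes a shorter
combination of `N` of them divisible by `(X - ν) ^ t`. Then the Wronskian of its terms, freed of the
factors `f_e`, is divisible by `(X - ν) ^ t` although its degree is less than `t`, so it vanishes.
This contradicts the linear independence of the terms: if polynomials of degree at most `m`, with
`m! ≠ 0`, satisfied a linear differential equation of order less than `N`, comparing leading
coefficients would show that the degrees of all elements of their span are roots of one nonzero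
polynomial of degree less than `N`, while the span contains elements of `N` distinct degrees.
-/

open Polynomial Module
open scoped Nat

section FactorialCast

variable {R : Type*} [CommRing R]

theorem natCast_factorial_ne_zero_of_le {m n : ℕ} (hn : (n ! : R) ≠ 0) (hmn : m ≤ n) :
    (m ! : R) ≠ 0 := fun hm =>
  hn <| zero_dvd_iff.1 <| hm ▸ Nat.cast_dvd_cast (Nat.factorial_dvd_factorial hmn)

theorem natCast_ne_zero_of_factorial_ne_zero {k m : ℕ} (hm : (m ! : R) ≠ 0) (hk : 0 < k)
    (hkm : k ≤ m) : (k : R) ≠ 0 := fun hk0 =>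
  hm <| zero_dvd_iff.1 <| hk0 ▸ Nat.cast_dvd_cast (Nat.dvd_factorial hk hkm)

theorem natCast_injOn_of_factorial_ne_zero {m : ℕ} (hm : (m ! : R) ≠ 0) :
    Set.InjOn (Nat.cast : ℕ → R) (Set.Iic m) := by
  intro a ha b hb hab
  wlog h : a ≤ b generalizing a b
  · exact (this hb ha hab.symm (le_of_not_ge h)).symm
  by_contra hne
  refine natCast_ne_zero_of_factorial_ne_zero hm (Nat.sub_pos_of_lt (lt_of_le_of_ne h hne))
    ((Nat.sub_le b a).trans hb) ?_
  rw [Nat.cast_sub h, hab, sub_self]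

theorem natCast_factorial_ne_zero_of_lt_ringChar [IsDomain R] {m : ℕ}
    (hm : ringChar R = 0 ∨ m < ringChar R) : (m ! : R) ≠ 0 := by
  rcases CharP.char_is_prime_or_zero R (ringChar R) with hp | h0
  · have := Fact.mk hp
    exact ((IsUnit.natCast_factorial_iff_of_charP (ringChar R)).2
      (hm.resolve_left hp.ne_zero)).ne_zero
  · rw [Ne, ringChar.spec, h0, zero_dvd_iff]
    exact m.factorial_ne_zero

end FactorialCast

section Wronskian

variable {R : Type*} [CommRing R]

/-- The Wronskian matrix of a tuple of polynomials: row `k` holds the `k`-th derivatives. -/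
noncomputable def wronskianMatrix {N : ℕ} (g : Fin N → R[X]) : Matrix (Fin N) (Fin N) R[X] :=
  Matrix.of fun k i => derivative^[(k : ℕ)] (g i)

theorem coeff_X_pow_mul_iterate_derivative (g : R[X]) (k s : ℕ) :
    (X ^ k * derivative^[k] g).coeff s = s.descFactorial k * g.coeff s := by
  rw [coeff_X_pow_mul']
  split_ifs with hks
  · rw [coeff_iterate_derivative, Nat.sub_add_cancel hks, nsmul_eq_mul]
  · rw [Nat.descFactorial_of_lt (not_le.1 hks), Nat.cast_zero, zero_mul]

theorem natDegree_X_pow_mul_iterate_derivative_le (g : R[X]) (k : ℕ) :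
    (X ^ k * derivative^[k] g).natDegree ≤ g.natDegree :=
  natDegree_le_iff_coeff_eq_zero.2 fun s hs => by
    rw [coeff_X_pow_mul_iterate_derivative, coeff_eq_zero_of_natDegree_lt hs, mul_zero]

variable [IsDomain R]

theorem linearIndependent_descPochhammer : LinearIndependent R (descPochhammer R) :=
  Sequence.linearIndependent
    ⟨descPochhammer R, fun k => by
      rw [degree_eq_natDegree (monic_descPochhammer R k).ne_zero, descPochhammer_natDegree]⟩

theorem card_filter_sum_mul_descFactorial_eq_zero_lt [DecidableEq R] {N m : ℕ}
    (hm : (m ! : R) ≠ 0) {c : Fin N → R} (hc : c ≠ 0) :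
    ((Finset.range (m + 1)).filter fun s => ∑ k, c k * (s.descFactorial k : R) = 0).card < N := by
  set D := (Finset.range (m + 1)).filter fun s => ∑ k, c k * (s.descFactorial k : R) = 0
  let χ : R[X] := ∑ k, c k • descPochhammer R k
  have hχ : χ ≠ 0 := fun h0 => hc <| funext <| Fintype.linearIndependent_iff.1
    (linearIndependent_descPochhammer.comp _ Fin.val_injective) c h0
  have hχdeg : χ.degree < N := mem_degreeLT.1 <| sum_mem fun k _ => Submodule.smul_mem _ _ <|
    mem_degreeLT.2 <| by
      rw [degree_eq_natDegree (monic_descPochhammer R k).ne_zero, descPochhammer_natDegree]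
      exact_mod_cast k.2
  have hinj : Set.InjOn (Nat.cast : ℕ → R) D := (natCast_injOn_of_factorial_ne_zero hm).mono
    fun s hs => Nat.lt_succ_iff.1 (Finset.mem_range.1 (Finset.mem_filter.1 hs).1)
  have hroots : D.image (Nat.cast : ℕ → R) ⊆ χ.roots.toFinset := by
    intro x hx
    obtain ⟨s, hs, rfl⟩ := Finset.mem_image.1 hx
    rw [Multiset.mem_toFinset, mem_roots hχ, IsRoot, eval_finsetSum]
    simpa only [eval_smul, smul_eq_mul, descPochhammer_eval_eq_descFactorial]
      using (Finset.mem_filter.1 hs).2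
  calc D.card = (D.image (Nat.cast : ℕ → R)).card := (Finset.card_image_of_injOn hinj).symm
    _ ≤ χ.roots.toFinset.card := Finset.card_le_card hroots
    _ ≤ χ.natDegree := (Multiset.toFinset_card_le _).trans (card_roots' χ)
    _ < N := (natDegree_lt_iff_degree_lt hχ).2 hχdeg

theorem exists_mem_span_natDegree_notMem {N : ℕ} {g : Fin N → R[X]}
    (hg : LinearIndependent R g) {D : Finset ℕ} (hD : D.card < N) :
    ∃ v ∈ Submodule.span R (Set.range g), v ≠ 0 ∧ v.natDegree ∉ D := by
  let coeffs : (Fin N → R) →ₗ[R] (D → R) :=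
    (LinearMap.pi fun s : D => lcoeff R s) ∘ₗ Fintype.linearCombination R g
  have hker : ¬ Function.Injective coeffs := fun hinj =>
    absurd (card_le_of_injective R coeffs hinj) (by simpa using hD)
  obtain ⟨a, ha, ha0⟩ : ∃ a, coeffs a = 0 ∧ a ≠ 0 := by
    simpa [injective_iff_map_eq_zero] using hker
  let v := Fintype.linearCombination R g a
  have hv0 : v ≠ 0 := fun h => ha0 <| funext <| Fintype.linearIndependent_iff.1 hg a h
  refine ⟨v, Fintype.range_linearCombination R g ▸ ⟨a, rfl⟩, hv0, fun hvD => ?_⟩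
  exact leadingCoeff_ne_zero.2 hv0 (congrFun ha ⟨v.natDegree, hvD⟩)

theorem exists_sum_mul_descFactorial_mul_leadingCoeff_eq_zero {N : ℕ} {h : Fin N → R[X]}
    (hh : h ≠ 0) :
    ∃ c : Fin N → R, c ≠ 0 ∧ ∀ v : R[X], ∑ k, h k * derivative^[(k : ℕ)] v = 0 →
      (∑ k, c k * (v.natDegree.descFactorial k : R)) * v.leadingCoeff = 0 := by
  -- Up to the factor `X ^ N`, the equation is a combination of the degree-preserving operators
  -- `X ^ k * derivative^[k]`, and the top coefficients of the `H k` give its indicial polynomial.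
  let H : Fin N → R[X] := fun k => X ^ (N - k) * h k
  obtain ⟨k₀, hk₀⟩ := Function.ne_iff.1 hh
  have : Nonempty (Fin N) := ⟨k₀⟩
  obtain ⟨k₁, hk₁⟩ := Finite.exists_max fun k => (H k).degree
  have hH₁ : H k₁ ≠ 0 := fun h0 => mul_ne_zero (pow_ne_zero _ X_ne_zero) hk₀ <| degree_eq_bot.1 <|
    le_bot_iff.1 <| (hk₁ k₀).trans_eq <| degree_eq_bot.2 h0
  let E := (H k₁).natDegree
  refine ⟨fun k => (H k).coeff E, Function.ne_iff.2 ⟨k₁, leadingCoeff_ne_zero.2 hH₁⟩,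
    fun v hv => ?_⟩
  calc (∑ k, (H k).coeff E * (v.natDegree.descFactorial k : R)) * v.leadingCoeff
      = ∑ k, (H k * (X ^ (k : ℕ) * derivative^[k] v)).coeff (E + v.natDegree) := by
        rw [Finset.sum_mul]
        refine Finset.sum_congr rfl fun k _ => ?_
        rw [coeff_mul_add_eq_of_natDegree_le (natDegree_le_natDegree (hk₁ k))
          (natDegree_X_pow_mul_iterate_derivative_le v k), coeff_X_pow_mul_iterate_derivative,
          mul_assoc, leadingCoeff]
    _ = (X ^ N * ∑ k, h k * derivative^[(k : ℕ)] v).coeff (E + v.natDegree) := by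
        rw [Finset.mul_sum, finsetSum_coeff]
        refine Finset.sum_congr rfl fun k _ => congrArg (coeff · _) ?_
        rw [show X ^ N = X ^ (N - (k : ℕ)) * X ^ (k : ℕ) from (pow_sub_mul_pow X k.2.le).symm]
        ring
    _ = 0 := by rw [hv, mul_zero, coeff_zero]

theorem det_wronskianMatrix_ne_zero {N m : ℕ} (hm : (m ! : R) ≠ 0) {g : Fin N → R[X]}
    (hg : LinearIndependent R g) (hdeg : ∀ i, (g i).natDegree ≤ m) :
    (wronskianMatrix g).det ≠ 0 := by
  classical
  intro hdet
  obtain ⟨h, hh, hhg⟩ := Matrix.exists_vecMul_eq_zero_iff.2 hdet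
  obtain ⟨c, hc, hcv⟩ := exists_sum_mul_descFactorial_mul_leadingCoeff_eq_zero hh
  let L : R[X] →ₗ[R] R[X] := ∑ k : Fin N, LinearMap.mulLeft R (h k) ∘ₗ derivative ^ (k : ℕ)
  have hL : ∀ v, L v = ∑ k, h k * derivative^[(k : ℕ)] v := fun v => by
    simp [L, LinearMap.sum_apply, Module.End.pow_apply]
  have hspan : Submodule.span R (Set.range g) ≤ LinearMap.ker L ⊓ degreeLE R m := by
    rw [Submodule.span_le]
    rintro _ ⟨i, rfl⟩
    exact ⟨(hL _).trans (congrFun hhg i), mem_degreeLE.2 <| degree_le_of_natDegree_le <| hdeg i⟩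
  obtain ⟨v, hv, hv0, hvD⟩ := exists_mem_span_natDegree_notMem hg
    (card_filter_sum_mul_descFactorial_eq_zero_lt hm hc)
  refine hvD (Finset.mem_filter.2 ⟨Finset.mem_range.2 <|
    Nat.lt_succ_of_le <| natDegree_le_of_degree_le <| mem_degreeLE.1 (hspan hv).2, ?_⟩)
  exact (mul_eq_zero.1 <| hcv v <| (hL v).symm.trans (hspan hv).1).resolve_right
    (leadingCoeff_ne_zero.2 hv0)

end Wronskian

section Degree

variable {R : Type*} [CommRing R]

theorem natDegree_le_of_mem_degreeLT {P : R[X]} {m : ℕ} (hP : P ∈ degreeLT R m) :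
    P.natDegree ≤ m - 1 := by
  rcases eq_or_ne P 0 with rfl | hP0
  · simp
  · exact Nat.le_sub_one_of_lt <| (natDegree_lt_iff_degree_lt hP0).2 <| mem_degreeLT.1 hP

theorem mul_mem_degreeLT {G P : R[X]} {m n : ℕ} (hG : G.natDegree ≤ n) (hP : P ∈ degreeLT R m) :
    G * P ∈ degreeLT R (m + n) := by
  rcases eq_or_ne P 0 with rfl | hP0
  · simp
  · have hPm := (natDegree_lt_iff_degree_lt hP0).2 (mem_degreeLT.1 hP)
    refine mem_degreeLT.2 <| degree_le_natDegree.trans_lt <| Nat.cast_lt.2 ?_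
    exact natDegree_mul_le.trans_lt (by omega)

theorem mul_derivative_mem_degreeLT {F P : R[X]} {m n : ℕ} (hF : F.natDegree ≤ n + 1)
    (hP : P ∈ degreeLT R m) : F * derivative P ∈ degreeLT R (m + n) := by
  rcases eq_or_ne P.natDegree 0 with hP0 | hP0
  · rw [derivative_of_natDegree_zero hP0, mul_zero]
    exact zero_mem _
  · have hPm := natDegree_le_of_mem_degreeLT hP
    have hP' := natDegree_derivative_lt hP0
    refine mem_degreeLT.2 <| degree_le_natDegree.trans_lt <| Nat.cast_lt.2 ?_
    exact natDegree_mul_le.trans_lt (by omega)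

theorem natDegree_det_le {ι : Type*} [Fintype ι] [DecidableEq ι] {M : Matrix ι ι R[X]} {d : ℕ}
    (hM : ∀ i j, (M i j).natDegree ≤ d) : M.det.natDegree ≤ Fintype.card ι * d := by
  rw [Matrix.det_apply]
  refine natDegree_sum_le_of_forall_le _ _ fun σ _ => (natDegree_smul_le _ _).trans ?_
  refine (natDegree_prod_le _ _).trans ?_
  exact Finset.sum_le_card_nsmul _ _ d fun i _ => hM (σ i) i

end Degree

theorem dvd_det_mul_of_forall_dvd_mulVec {R ι : Type*} [CommRing R] [Fintype ι] [DecidableEq ι]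
    {M : Matrix ι ι R} {q : R} {v : ι → R} (h : ∀ k, q ∣ (M.mulVec v) k) (i : ι) :
    q ∣ M.det * v i := by
  have hcramer : M.adjugate.mulVec (M.mulVec v) = M.det • v := by
    rw [Matrix.mulVec_mulVec, Matrix.adjugate_mul, Matrix.smul_mulVec, Matrix.one_mulVec]
  rw [← smul_eq_mul, ← Pi.smul_apply, ← hcramer]
  exact Finset.dvd_sum fun k _ => dvd_mul_of_dvd_right (h k) _

section LogDeriv

variable {R : Type*} [CommRing R]

/-- The polynomials whose logarithmic derivative is a fraction `G / F` with `natDegree G ≤ n`. -/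
def logDerivSubmonoid (F : R[X]) (n : ℕ) : Submonoid R[X] where
  carrier := {f | ∃ G : R[X], G.natDegree ≤ n ∧ F * derivative f = G * f}
  one_mem' := ⟨0, by simp⟩
  mul_mem' := by
    rintro f g ⟨G, hG, hf⟩ ⟨H, hH, hg⟩
    refine ⟨G + H, (natDegree_add_le _ _).trans (max_le hG hH), ?_⟩
    rw [derivative_mul]
    linear_combination g * hf + f * hg

theorem X_sub_C_mem_logDerivSubmonoid {F : R[X]} {n : ℕ} {ν : R} (hFn : F.natDegree ≤ n + 1)
    (hν : F.IsRoot ν) : X - C ν ∈ logDerivSubmonoid F n :=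
  ⟨F /ₘ (X - C ν), by
    nontriviality R
    rw [natDegree_divByMonic F (monic_X_sub_C ν), natDegree_X_sub_C]
    exact Nat.sub_le_of_le_add hFn, by
    rw [derivative_X_sub_C, mul_one, mul_comm, mul_divByMonic_eq_iff_isRoot.2 hν]⟩

/-- The operators with `F ^ k * (P * f)⁽ᵏ⁾ = f * twistedDeriv F G k P` whenever
`F * f' = G * f`, see `pow_mul_iterate_derivative_mul`. -/
noncomputable def twistedDeriv (F G : R[X]) : ℕ → R[X] →ₗ[R] R[X]
  | 0 => LinearMap.id
  | k + 1 => LinearMap.mulLeft R F ∘ₗ derivative ∘ₗ twistedDeriv F G k +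
      LinearMap.mulLeft R (G - (k : R[X]) * derivative F) ∘ₗ twistedDeriv F G k

theorem twistedDeriv_succ (F G : R[X]) (k : ℕ) (P : R[X]) :
    twistedDeriv F G (k + 1) P = F * derivative (twistedDeriv F G k P) +
      (G - (k : R[X]) * derivative F) * twistedDeriv F G k P := rfl

theorem pow_mul_iterate_derivative_mul {F G f : R[X]} (h : F * derivative f = G * f) (k : ℕ)
    (P : R[X]) : F ^ k * derivative^[k] (P * f) = f * twistedDeriv F G k P := by
  induction k with
  | zero => simp [twistedDeriv, mul_comm]
  | succ k ih =>
    have hpow : F * derivative (F ^ k) = (k : R[X]) * derivative F * F ^ k := by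
      cases k with
      | zero => simp
      | succ k =>
        rw [derivative_pow, map_natCast, Nat.add_sub_cancel]
        ring
    have hder := congrArg derivative ih
    rw [derivative_mul, derivative_mul] at hder
    rw [twistedDeriv_succ, Function.iterate_succ_apply']
    linear_combination F * hder - derivative^[k] (P * f) * hpow
      - (k : R[X]) * derivative F * ih + twistedDeriv F G k P * h

theorem twistedDeriv_mem_degreeLT {F G P : R[X]} {n A : ℕ} (hF : F.natDegree ≤ n + 1)
    (hG : G.natDegree ≤ n) (hP : P ∈ degreeLT R A) (k : ℕ) :
    twistedDeriv F G k P ∈ degreeLT R (A + n * k) := by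
  induction k with
  | zero => exact hP
  | succ k ih =>
    have hF' : (derivative F).natDegree ≤ n := (natDegree_derivative_le F).trans (by omega)
    have hcoeff : (G - (k : R[X]) * derivative F).natDegree ≤ n :=
      (natDegree_sub_le _ _).trans <| max_le hG <| natDegree_mul_le.trans <| by
        rwa [natDegree_natCast, zero_add]
    rw [twistedDeriv_succ, Nat.mul_succ, ← add_assoc]
    exact add_mem (mul_derivative_mem_degreeLT hF ih) (mul_mem_degreeLT hcoeff ih)

theorem pow_dvd_pow_mul_iterate_derivative {q F Ψ : R[X]} {t : ℕ} (hq : q ∣ F) (hΨ : q ^ t ∣ Ψ)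
    (k : ℕ) : q ^ t ∣ F ^ k * derivative^[k] Ψ :=
  calc q ^ t ∣ q ^ (k + (t - k)) := pow_dvd_pow _ (by omega)
    _ = q ^ k * q ^ (t - k) := pow_add _ _ _
    _ ∣ F ^ k * derivative^[k] Ψ :=
      mul_dvd_mul (pow_dvd_pow_of_dvd hq k) (pow_sub_dvd_iterate_derivative_of_pow_dvd k hΨ)

theorem prod_pow_mul_det_wronskianMatrix_mul {N : ℕ} {F : R[X]} {G f : Fin N → R[X]}
    (h : ∀ i, F * derivative (f i) = G i * f i) (P : Fin N → R[X]) :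
    (∏ k : Fin N, F ^ (k : ℕ)) * (wronskianMatrix fun i => P i * f i).det =
      (∏ i, f i) * (Matrix.of fun k i : Fin N => twistedDeriv F (G i) k (P i)).det := by
  rw [← Matrix.det_mul_column, ← Matrix.det_mul_row]
  congr 1
  ext1 k i
  exact pow_mul_iterate_derivative_mul (h i) k (P i)

end LogDeriv

section IndepBelow

variable {R : Type*} [CommRing R]

/-- A family of polynomials `f` is independent below `A` if it satisfies no nontrivial linear
relation whose coefficients are polynomials of degree less than `A`. -/
def IndepBelow {ι : Type*} [Fintype ι] (A : ℕ) (f : ι → R[X]) : Prop :=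
  ∀ P : ι → R[X], (∀ i, P i ∈ degreeLT R A) → ∑ i, P i * f i = 0 → P = 0

variable {ι κ : Type*} [Fintype ι] [Fintype κ] {A : ℕ} {f : ι → R[X]}

theorem IndepBelow.comp_injective (hf : IndepBelow A f) {j : κ → ι} (hj : Function.Injective j) :
    IndepBelow A (f ∘ j) := by
  intro P hP hsum
  have hext := hf (Function.extend j P 0) (fun i => ?_) ?_
  · rw [← Function.extend_comp hj P 0, hext]
    rfl
  · by_cases hi : ∃ k, j k = i
    · obtain ⟨k, rfl⟩ := hi
      rw [hj.extend_apply]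
      exact hP k
    · rw [Function.extend_apply' _ _ _ hi]
      exact zero_mem _
  · rw [← hsum]
    refine (Fintype.sum_of_injective j hj _ _ (fun i hi => ?_) fun k => ?_).symm
    · rw [Function.extend_apply' _ _ _ hi, Pi.zero_apply, zero_mul]
    · rw [hj.extend_apply, Function.comp_apply]

theorem IndepBelow.linearIndependent_mul [IsDomain R] (hf : IndepBelow A f) {P : ι → R[X]}
    (hP : ∀ i, P i ∈ degreeLT R A) (hP0 : ∀ i, P i ≠ 0) :
    LinearIndependent R fun i => P i * f i := by
  refine Fintype.linearIndependent_iff.2 fun a ha i => ?_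
  have hzero := hf (fun i => a i • P i) (fun i => Submodule.smul_mem _ _ (hP i)) <| by
    simpa only [smul_mul_assoc] using ha
  exact (smul_eq_zero.1 (congrFun hzero i)).resolve_right (hP0 i)

variable [IsDomain R]

theorem le_of_pow_X_sub_C_dvd_sum_mul {N n d t : ℕ} {F : R[X]} {ν : R} {f P : Fin N → R[X]}
    (hF0 : F ≠ 0) (hFn : F.natDegree ≤ n + 1) (hν : F.IsRoot ν)
    (hf : ∀ i, f i ∈ logDerivSubmonoid F n) (hfd : ∀ i, (f i).natDegree ≤ d)
    (hd : ((A - 1 + d)! : R) ≠ 0) (hP : ∀ i, P i ∈ degreeLT R A)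
    (hlin : LinearIndependent R fun i => P i * f i) {i₀ : Fin N} (hi₀ : ¬ (f i₀).IsRoot ν)
    (hdvd : (X - C ν) ^ t ∣ ∑ i, P i * f i) : t ≤ N * (A - 1 + n * N) := by
  choose G hG hFG using hf
  let M : Matrix (Fin N) (Fin N) R[X] := Matrix.of fun k i => twistedDeriv F (G i) k (P i)
  have hdet : M.det ≠ 0 := by
    refine right_ne_zero_of_mul (a := ∏ i, f i) ?_
    rw [← prod_pow_mul_det_wronskianMatrix_mul hFG]
    refine mul_ne_zero (Finset.prod_ne_zero_iff.2 fun k _ => pow_ne_zero _ hF0) ?_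
    exact det_wronskianMatrix_ne_zero hd hlin fun i => natDegree_mul_le.trans <|
      add_le_add (natDegree_le_of_mem_degreeLT (hP i)) (hfd i)
  have hMf : ∀ k, M.mulVec f k = F ^ (k : ℕ) * derivative^[(k : ℕ)] (∑ i, P i * f i) := fun k => by
    rw [iterate_derivative_sum, Finset.mul_sum]
    simp only [pow_mul_iterate_derivative_mul (hFG _), mul_comm (f _)]
    rfl
  have hdvd_det : (X - C ν) ^ t ∣ M.det :=
    (prime_X_sub_C ν).pow_dvd_of_dvd_mul_right t (mt dvd_iff_isRoot.1 hi₀)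
      (dvd_det_mul_of_forall_dvd_mulVec (fun k => hMf k ▸
        pow_dvd_pow_mul_iterate_derivative (dvd_iff_isRoot.2 hν) hdvd k) i₀)
  calc t = ((X - C ν) ^ t).natDegree := by rw [natDegree_pow, natDegree_X_sub_C, mul_one]
    _ ≤ M.det.natDegree := natDegree_le_of_dvd hdvd_det hdet
    _ ≤ Fintype.card (Fin N) * (A - 1 + n * N) := natDegree_det_le fun k i => by
        have hki := natDegree_le_of_mem_degreeLT (twistedDeriv_mem_degreeLT hFn (hG i) (hP i) k)
        have hkN : n * (k : ℕ) ≤ n * N := Nat.mul_le_mul_left n k.2.le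
        exact hki.trans (by omega)
    _ = N * (A - 1 + n * N) := by rw [Fintype.card_fin]

theorem IndepBelow.eq_zero_of_pow_X_sub_C_dvd {n d t : ℕ} {F : R[X]} {ν : R}
    (hfA : IndepBelow A f) (hF0 : F ≠ 0) (hFn : F.natDegree ≤ n + 1) (hν : F.IsRoot ν)
    (hf : ∀ i, f i ∈ logDerivSubmonoid F n) (hfd : ∀ i, (f i).natDegree ≤ d)
    (hd : ((A - 1 + d)! : R) ≠ 0) (hfν : ∀ i, ¬ (f i).IsRoot ν)
    (ht : Fintype.card ι * (A - 1 + n * Fintype.card ι) < t) {P : ι → R[X]}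
    (hP : ∀ i, P i ∈ degreeLT R A) (hdvd : (X - C ν) ^ t ∣ ∑ i, P i * f i) : P = 0 := by
  classical
  by_contra hne
  obtain ⟨i, hi⟩ := Function.ne_iff.1 hne
  let e := (Fintype.equivFin {i // P i ≠ 0}).symm
  let j : Fin (Fintype.card {i // P i ≠ 0}) → ι := Subtype.val ∘ e
  have hj : Function.Injective j := Subtype.val_injective.comp e.injective
  have hsum : ∑ k, P (j k) * f (j k) = ∑ i, P i * f i :=
    Fintype.sum_of_injective j hj _ _ (fun i hi => by
      by_contra h0
      exact hi ⟨e.symm ⟨i, left_ne_zero_of_mul h0⟩, by simp [j]⟩) fun _ => rfl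
  have hcard : Fintype.card {i // P i ≠ 0} ≤ Fintype.card ι := Fintype.card_subtype_le _
  have hle := le_of_pow_X_sub_C_dvd_sum_mul hF0 hFn hν (fun k => hf (j k)) (fun k => hfd (j k)) hd
    (fun k => hP (j k))
    ((hfA.comp_injective hj).linearIndependent_mul (fun k => hP (j k)) fun k => (e k).2)
    (hfν (j (e.symm ⟨i, hi⟩))) (hsum ▸ hdvd)
  exact (hle.trans (by gcongr)).not_gt ht

theorem indepBelow_mul_pow {q : R[X]} (hq : q ≠ 0)
    (hf : ∀ P : ι → R[X], (∀ i, P i ∈ degreeLT R A) → q ∣ ∑ i, P i * f i → P = 0) (s : ℕ) :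
    IndepBelow A fun x : ι × Fin s => f x.1 * q ^ (x.2 : ℕ) := by
  induction s with
  | zero => exact fun P _ _ => Subsingleton.elim _ _
  | succ s ih =>
    intro P hP hsum
    have hsplit : ∑ i, P (i, 0) * f i +
        q * ∑ x : ι × Fin s, P (x.1, x.2.succ) * (f x.1 * q ^ (x.2 : ℕ)) = 0 := by
      rw [← hsum, Fintype.sum_prod_type, Fintype.sum_prod_type, Finset.mul_sum,
        ← Finset.sum_add_distrib]
      refine Finset.sum_congr rfl fun i _ => ?_
      simp only [Fin.sum_univ_succ, Finset.mul_sum, Fin.val_zero, pow_zero, mul_one, Fin.val_succ,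
        pow_succ]
      exact congrArg _ (Finset.sum_congr rfl fun j _ => by ring)
    have hhead : (fun i => P (i, 0)) = 0 := hf _ (fun i => hP _) <| by
      rw [eq_neg_of_add_eq_zero_left hsplit, dvd_neg]
      exact dvd_mul_right _ _
    have htail : (fun x : ι × Fin s => P (x.1, x.2.succ)) = 0 := ih _ (fun x => hP _) <| by
      refine (mul_eq_zero.1 ?_).resolve_left hq
      have hzero : ∑ i, P (i, 0) * f i = 0 := Finset.sum_eq_zero fun i _ => by
        rw [show P (i, 0) = 0 from congrFun hhead i, zero_mul]
      rwa [hzero, zero_add] at hsplit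
    funext ⟨i, j⟩
    exact Fin.cases (congrFun hhead i) (fun j => congrFun htail (i, j)) j

end IndepBelow

section Stepanov

variable {R : Type*} [CommRing R] [IsDomain R]

theorem card_mul_le_natDegree_of_isRoot_iterate_derivative {Ψ : R[X]} (hΨ : Ψ ≠ 0) {D : ℕ}
    (hD : ((D - 1)! : R) ≠ 0) {S : Finset R}
    (hS : ∀ x ∈ S, ∀ k < D, (derivative^[k] Ψ).IsRoot x) : S.card * D ≤ Ψ.natDegree := by
  classical
  have hroots : D • S.val ≤ Ψ.roots := Multiset.le_iff_count.2 fun x => by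
    rw [Multiset.count_nsmul, count_roots]
    by_cases hx : x ∈ S
    · rw [Multiset.count_eq_one_of_mem S.nodup hx, mul_one]
      rcases Nat.eq_zero_or_pos D with rfl | hDpos
      · exact Nat.zero_le _
      · refine Nat.le_of_pred_lt ?_
        exact lt_rootMultiplicity_of_isRoot_iterate_derivative_of_mem_nonZeroDivisors hΨ
          (fun k hk => hS x hx k (Nat.lt_of_le_pred hDpos hk)) (mem_nonZeroDivisors_of_ne_zero hD)
    · rw [Multiset.count_eq_zero_of_notMem hx, mul_zero]
      exact Nat.zero_le _
  calc S.card * D = (D • S.val).card := by rw [Multiset.card_nsmul, mul_comm, Finset.card_val]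
    _ ≤ Ψ.roots.card := Multiset.card_le_card hroots
    _ ≤ Ψ.natDegree := card_roots' Ψ

variable {ι : Type*} [Fintype ι]

theorem exists_ne_zero_forall_sum_twistedDeriv_eq_zero {F : R[X]} {G : ι → R[X]} {n A D : ℕ}
    (hF : F.natDegree ≤ n + 1) (hG : ∀ i, (G i).natDegree ≤ n)
    (hcard : D * (A + n * D) < Fintype.card ι * A) :
    ∃ P : ι → R[X], P ≠ 0 ∧ (∀ i, P i ∈ degreeLT R A) ∧
      ∀ k < D, ∑ i, twistedDeriv F (G i) k (P i) = 0 := by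
  let T (k : ℕ) : (ι → degreeLT R A) →ₗ[R] R[X] :=
    ∑ i, twistedDeriv F (G i) k ∘ₗ (degreeLT R A).subtype ∘ₗ LinearMap.proj i
  have hT (k : ℕ) (P : ι → degreeLT R A) : T k P = ∑ i, twistedDeriv F (G i) k (P i) := by
    simp [T]
  have hTmem (k : Fin D) (P : ι → degreeLT R A) : T k P ∈ degreeLT R (A + n * D) := by
    rw [hT]
    exact sum_mem fun i _ => degreeLT_mono (by gcongr; exact k.2.le)
      (twistedDeriv_mem_degreeLT hF (hG i) (P i).2 k)
  let L : (ι → degreeLT R A) →ₗ[R] (Fin D → degreeLT R (A + n * D)) :=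
    LinearMap.pi fun k => (T k).codRestrict _ (hTmem k)
  let b := Pi.basis fun _ : ι => degreeLT.basis R A
  let b' := Pi.basis fun _ : Fin D => degreeLT.basis R (A + n * D)
  have hL : ¬ Function.Injective L := fun hinj => by
    have := Module.Finite.of_basis b'
    have hrank := LinearMap.finrank_le_finrank_of_injective hinj
    rw [finrank_eq_card_basis b, finrank_eq_card_basis b'] at hrank
    exact hcard.not_ge (by simpa using hrank)
  obtain ⟨P, hP, hP0⟩ : ∃ P, L P = 0 ∧ P ≠ 0 := by
    simpa [injective_iff_map_eq_zero] using hL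
  refine ⟨fun i => P i, fun h0 => hP0 (funext fun i => Subtype.ext (congrFun h0 i)),
    fun i => (P i).2, fun k hk => ?_⟩
  rw [← hT]
  exact congrArg Subtype.val (congrFun hP ⟨k, hk⟩)

theorem IndepBelow.card_mul_le {f : ι → R[X]} {F : R[X]} {n A D d : ℕ} (hfA : IndepBelow A f)
    (hF : F.natDegree ≤ n + 1) (hf : ∀ i, f i ∈ logDerivSubmonoid F n)
    (hfd : ∀ i, (f i).natDegree ≤ d) (hD : ((D - 1)! : R) ≠ 0)
    (hcard : D * (A + n * D) < Fintype.card ι * A) {S : Finset R}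
    (hSf : ∀ x ∈ S, ∀ i, (f i).eval x = 1) (hSF : ∀ x ∈ S, ¬ F.IsRoot x) :
    S.card * D ≤ A + d := by
  choose G hG hFG using hf
  obtain ⟨P, hP0, hP, hsum⟩ := exists_ne_zero_forall_sum_twistedDeriv_eq_zero hF hG hcard
  have hroot : ∀ x ∈ S, ∀ k < D, (derivative^[k] (∑ i, P i * f i)).IsRoot x := by
    intro x hx k hk
    have heval : (F ^ k * derivative^[k] (∑ i, P i * f i)).eval x = 0 :=
      calc (F ^ k * derivative^[k] (∑ i, P i * f i)).eval x
          = (∑ i, f i * twistedDeriv F (G i) k (P i)).eval x := by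
            simp only [iterate_derivative_sum, Finset.mul_sum,
              pow_mul_iterate_derivative_mul (hFG _)]
        _ = (∑ i, twistedDeriv F (G i) k (P i)).eval x := by
            simp only [eval_finsetSum, eval_mul, hSf x hx, one_mul]
        _ = 0 := by rw [hsum k hk, eval_zero]
    rw [eval_mul, eval_pow] at heval
    exact (mul_eq_zero.1 heval).resolve_left (pow_ne_zero k (hSF x hx))
  calc S.card * D ≤ (∑ i, P i * f i).natDegree :=
        card_mul_le_natDegree_of_isRoot_iterate_derivative (fun h0 => hP0 (hfA P hP h0)) hD hroot
    _ ≤ A + d := natDegree_sum_le_of_forall_le _ _ fun i _ => natDegree_mul_le.trans <|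
        add_le_add ((natDegree_le_of_mem_degreeLT (hP i)).trans (Nat.sub_le A 1)) (hfd i)

end Stepanov

section PowerProduct

variable {R : Type*} [CommRing R]

/-- The product of the powers `(X - ν l) ^ (t * e l)`, which takes the value `1` at every `x`
such that each `x - ν l` is a `t`-th root of unity. -/
noncomputable def powerProduct {m : ℕ} (t : ℕ) (ν : Fin m → R) (e : Fin m → ℕ) : R[X] :=
  ∏ l, ((X - C (ν l)) ^ t) ^ e l

variable {m t : ℕ} {ν : Fin m → R}

theorem powerProduct_cons (ν : Fin (m + 1) → R) (a : ℕ) (e : Fin m → ℕ) :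
    powerProduct t ν (Fin.cons a e) =
      powerProduct t (Fin.tail ν) e * ((X - C (ν 0)) ^ t) ^ a := by
  simp only [powerProduct, Fin.prod_univ_succ, Fin.cons_zero, Fin.cons_succ, Fin.tail, mul_comm]

theorem eval_powerProduct_eq_one (e : Fin m → ℕ) {x : R} (hx : ∀ l, (x - ν l) ^ t = 1) :
    (powerProduct t ν e).eval x = 1 := by
  simp [powerProduct, eval_prod, hx]

theorem powerProduct_mem_logDerivSubmonoid {F : R[X]} {n : ℕ} (hF : F.natDegree ≤ n + 1)
    (hν : ∀ l, F.IsRoot (ν l)) (e : Fin m → ℕ) :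
    powerProduct t ν e ∈ logDerivSubmonoid F n :=
  prod_mem fun l _ => pow_mem (pow_mem (X_sub_C_mem_logDerivSubmonoid hF (hν l)) t) (e l)

theorem not_isRoot_powerProduct [IsDomain R] (e : Fin m → ℕ) {x : R} (hx : ∀ l, x ≠ ν l) :
    ¬ (powerProduct t ν e).IsRoot x := by
  rw [powerProduct, IsRoot, eval_prod, ← Ne, Finset.prod_ne_zero_iff]
  intro l _
  simpa only [eval_pow, eval_sub, eval_X, eval_C] using
    pow_ne_zero _ (pow_ne_zero _ (sub_ne_zero.2 (hx l)))

theorem sum_val_le {B : ℕ} (e : Fin m → Fin B) : ∑ l, (e l : ℕ) ≤ m * B := by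
  simpa using Finset.sum_le_card_nsmul Finset.univ (fun l => (e l : ℕ)) B fun l _ => (e l).2.le

theorem natDegree_powerProduct_le (e : Fin m → ℕ) :
    (powerProduct t ν e).natDegree ≤ t * ∑ l, e l := by
  refine (natDegree_prod_le _ _).trans ?_
  rw [Finset.mul_sum]
  refine Finset.sum_le_sum fun l _ => ?_
  refine natDegree_pow_le_of_le _ (natDegree_pow_le_of_le _ (natDegree_X_sub_C_le _)) |>.trans ?_
  rw [mul_one, mul_comm]

variable [IsDomain R]

theorem IndepBelow.cons_powerProduct {ν : Fin (m + 1) → R} (hν : Function.Injective ν) {A B : ℕ}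
    (hA : IndepBelow A fun e : Fin m → Fin B => powerProduct t (Fin.tail ν) fun l => e l)
    (hd : ((A - 1 + t * (m * B))! : R) ≠ 0) (ht : B ^ m * (A - 1 + m * B ^ m) < t) (s : ℕ) :
    IndepBelow A fun x : (Fin m → Fin B) × Fin s =>
      powerProduct t ν (Fin.cons x.2 fun l => x.1 l) := by
  have hF : (Lagrange.nodal Finset.univ ν).natDegree ≤ m + 1 := by
    rw [Lagrange.natDegree_nodal, Finset.card_univ, Fintype.card_fin]
  have hroot (l : Fin (m + 1)) : (Lagrange.nodal Finset.univ ν).IsRoot (ν l) :=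
    Lagrange.eval_nodal_at_node (Finset.mem_univ l)
  have hzero (P : (Fin m → Fin B) → R[X]) (hP : ∀ e, P e ∈ degreeLT R A)
      (hdvd : (X - C (ν 0)) ^ t ∣ ∑ e, P e * powerProduct t (Fin.tail ν) fun l => e l) : P = 0 :=
    hA.eq_zero_of_pow_X_sub_C_dvd Lagrange.nodal_ne_zero hF (hroot 0)
      (fun e => powerProduct_mem_logDerivSubmonoid hF (fun l => hroot l.succ) _)
      (fun e => (natDegree_powerProduct_le _).trans <| Nat.mul_le_mul_left t <| sum_val_le e) hd
      (fun e => not_isRoot_powerProduct _ fun l => hν.ne (Fin.succ_ne_zero l).symm)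
      (by simpa using ht) hP hdvd
  simp only [powerProduct_cons]
  exact indepBelow_mul_pow (pow_ne_zero t (X_sub_C_ne_zero (ν 0))) hzero s

theorem indepBelow_powerProduct {A B : ℕ} (hB : 0 < B) (hν : Function.Injective ν)
    (hd : ((A - 1 + t * (m * B))! : R) ≠ 0) (ht : B ^ m * (A - 1 + m * B ^ m) < t) :
    IndepBelow A fun e : Fin m → Fin B => powerProduct t ν fun l => e l := by
  induction m with
  | zero =>
    intro P _ hP
    funext e
    rw [Subsingleton.elim e default]
    simpa [powerProduct] using hP
  | succ m ih =>
    have hBm : B ^ m ≤ B ^ (m + 1) := Nat.pow_le_pow_right hB m.le_succ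
    have hd' : ((A - 1 + t * (m * B))! : R) ≠ 0 :=
      natCast_factorial_ne_zero_of_le hd (by gcongr; exact m.le_succ)
    have ht' : B ^ m * (A - 1 + m * B ^ m) < t := lt_of_le_of_lt (by gcongr; exact m.le_succ) ht
    have htail := ih (hν.comp (Fin.succ_injective m)) hd' ht'
    have hsplit : Function.Injective fun e : Fin (m + 1) → Fin B => (Fin.tail e, e 0) :=
      fun e e' h => by
        rw [← Fin.cons_self_tail e, ← Fin.cons_self_tail e']
        simp only [Prod.mk.injEq] at h
        rw [h.1, h.2]
    have hcons (e : Fin (m + 1) → Fin B) :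
        (Fin.cons (e 0) (fun l => Fin.tail e l) : Fin (m + 1) → ℕ) = fun l => (e l : ℕ) :=
      funext <| Fin.cases rfl fun _ => rfl
    simpa only [Function.comp_def, hcons] using
      (htail.cons_powerProduct hν hd' ht' B).comp_injective hsplit

theorem card_mul_le_of_indepBelow_powerProduct {n A B D s : ℕ} {ν : Fin (n + 1) → R}
    (hA : IndepBelow A fun x : (Fin n → Fin B) × Fin s =>
      powerProduct t ν (Fin.cons x.2 fun l => x.1 l))
    (ht : t ≠ 0) (hD : ((D - 1)! : R) ≠ 0) (hcard : D * (A + n * D) < B ^ n * s * A)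
    {S : Finset R} (hS : ∀ x ∈ S, ∀ l, (x - ν l) ^ t = 1) :
    S.card * D ≤ A + t * (s + n * B) := by
  have hF : (Lagrange.nodal Finset.univ ν).natDegree ≤ n + 1 := by
    rw [Lagrange.natDegree_nodal, Finset.card_univ, Fintype.card_fin]
  refine hA.card_mul_le hF (fun x => ?_) (fun x => ?_) hD ?_
    (fun x hx e => eval_powerProduct_eq_one _ (hS x hx)) fun x hx => ?_
  · exact powerProduct_mem_logDerivSubmonoid hF
      (fun l => Lagrange.eval_nodal_at_node (Finset.mem_univ l)) _
  · refine (natDegree_powerProduct_le _).trans (Nat.mul_le_mul_left t ?_)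
    rw [Fin.sum_cons]
    exact add_le_add x.2.2.le (sum_val_le x.1)
  · simpa using hcard
  · refine Lagrange.eval_nodal_not_at_node fun l _ hxl => ?_
    have hpow := hS x hx l
    rw [hxl, sub_self, zero_pow ht] at hpow
    exact zero_ne_one hpow

theorem card_mul_le_of_forall_sub_pow_eq_one {n B : ℕ} {ν : Fin (n + 1) → R}
    (hν : Function.Injective ν) (hn : n ≠ 0) (hB : n < B) (hBt : B ^ (2 * n + 1) ≤ t)
    (ht : ((t * (n * B + 1))! : R) ≠ 0) {S : Finset R} (hS : ∀ x ∈ S, ∀ l, (x - ν l) ^ t = 1) :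
    S.card * (B ^ n * (B - n)) ≤ B ^ n * (B - n) + (2 * n + 1) * t * B := by
  -- The largest `A` for which the independence criterion `B ^ n * (A - 1 + n * B ^ n) < t` follows
  -- from `B ^ (2 * n + 1) ≤ t`; the multiplicity is taken to be `A` as well.
  set A := B ^ n * (B - n) with hA
  have hBn : 0 < B ^ n := pow_pos (by omega) n
  have hA0 : 0 < A := Nat.mul_pos hBn (Nat.sub_pos_of_lt hB)
  have hAB : A + n * B ^ n = B ^ n * B := by
    rw [hA, mul_comm n, ← mul_add, Nat.sub_add_cancel hB.le]
  have hA_lt : A < B ^ n * B := hAB ▸ Nat.lt_add_of_pos_right (Nat.mul_pos (by omega) hBn)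
  have hABt : B ^ n * (A + n * B ^ n) ≤ t := hBt.trans_eq' <| by
    rw [hAB]
    ring
  have hAt : A ≤ t := (Nat.le_mul_of_pos_left A hBn).trans <|
    (Nat.mul_le_mul_left _ (Nat.le_add_right A _)).trans hABt
  have hlt : B ^ n * (A - 1 + n * B ^ n) < t :=
    lt_of_lt_of_le (Nat.mul_lt_mul_of_pos_left (by omega) hBn) hABt
  have hd : ((A - 1 + t * (n * B))! : R) ≠ 0 :=
    natCast_factorial_ne_zero_of_le ht (by rw [mul_add]; omega)
  have hindep := (indepBelow_powerProduct (by omega) (hν.comp (Fin.succ_injective n)) hd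
    hlt).cons_powerProduct hν hd hlt ((n + 1) * B)
  have hcard : A * (A + n * A) < B ^ n * ((n + 1) * B) * A :=
    calc A * (A + n * A) = (n + 1) * A * A := by ring
      _ < (n + 1) * (B ^ n * B) * A := by gcongr
      _ = B ^ n * ((n + 1) * B) * A := by ring
  refine (card_mul_le_of_indepBelow_powerProduct hindep (by omega)
    (natCast_factorial_ne_zero_of_le hd (Nat.le_add_right _ _)) hcard hS).trans_eq ?_
  ring

end PowerProduct

section Numerics

theorem succ_pow_mul_le_two_mul {n : ℕ} {x : ℝ} (hx : 4 * (n : ℝ) ≤ x) :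
    (x + 1) ^ n * x ≤ 2 * (x ^ n * (x - n)) := by
  have hx0 : 0 ≤ x := hx.trans' (by positivity)
  have hbernoulli : (3 / 4 : ℝ) ≤ (x / (x + 1)) ^ n :=
    calc (3 / 4 : ℝ) ≤ 1 + n * (x / (x + 1) - 1) := by
          have : (n : ℝ) * (1 - x / (x + 1)) ≤ 1 / 4 := by
            rw [one_sub_div (by positivity), add_sub_cancel_left, mul_one_div,
              div_le_iff₀ (by positivity)]
            linarith
          linarith
      _ ≤ (x / (x + 1)) ^ n := by
          refine one_add_mul_sub_le_pow ?_ n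
          linarith [show 0 ≤ x / (x + 1) by positivity]
  have hpow : 3 / 4 * (x + 1) ^ n ≤ x ^ n := by
    rwa [div_pow, le_div_iff₀ (by positivity)] at hbernoulli
  have hprod : 3 / 4 * (x + 1) ^ n * (3 / 4 * x) ≤ x ^ n * (x - n) := by
    gcongr
    linarith
  linarith [show 0 ≤ (x + 1) ^ n * x by positivity]

theorem four_mul_add_one_pow_le (n : ℕ) (hn : n ≠ 0) :
    (4 * (n : ℝ) + 1) ^ (2 * n + 1) ≤
      32 * n * (2 : ℝ) ^ (20 * (n : ℝ) * Real.log ((n : ℝ) + 1)) := by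
  have hn1 : (1 : ℝ) ≤ n := by exact_mod_cast Nat.one_le_iff_ne_zero.2 hn
  have hlog : 0 ≤ Real.log ((n : ℝ) + 1) := Real.log_nonneg (by linarith)
  have hrpow : ((n : ℝ) + 1) ^ (13 * n) ≤ (2 : ℝ) ^ (20 * (n : ℝ) * Real.log ((n : ℝ) + 1)) := by
    rw [Real.rpow_def_of_pos two_pos, ← Real.rpow_natCast, Real.rpow_def_of_pos (by positivity)]
    refine Real.exp_le_exp.2 ?_
    push_cast
    nlinarith [Real.log_two_gt_d9, mul_nonneg (zero_le_one.trans hn1) hlog]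
  calc (4 * (n : ℝ) + 1) ^ (2 * n + 1) ≤ (((n : ℝ) + 1) ^ 3) ^ (2 * n + 1) := by
        gcongr
        nlinarith [pow_le_pow_left₀ zero_le_one hn1 2, pow_le_pow_left₀ zero_le_one hn1 3]
    _ = ((n : ℝ) + 1) ^ (3 * (2 * n + 1)) := (pow_mul _ _ _).symm
    _ ≤ ((n : ℝ) + 1) ^ (13 * n) := pow_le_pow_right₀ (by linarith) (by omega)
    _ ≤ (2 : ℝ) ^ (20 * (n : ℝ) * Real.log ((n : ℝ) + 1)) := hrpow
    _ ≤ _ := le_mul_of_one_le_left (by positivity) (by linarith)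

theorem le_four_mul_add_one_pow_of_mul_le {n B : ℕ} {b c : ℝ} (hB : 4 * n + 1 ≤ B)
    (hBb : (B : ℝ) ≤ b) (hbB : b ≤ B + 1)
    (hc : c * ((B : ℝ) ^ n * (B - n)) ≤
      (B : ℝ) ^ n * (B - n) + (2 * n + 1) * b ^ (2 * n + 1) * B) :
    c ≤ 4 * ((n : ℝ) + 1) * (b + 1) ^ (n + 1) := by
  have hB' : 4 * (n : ℝ) + 1 ≤ B := by exact_mod_cast hB
  set A : ℝ := (B : ℝ) ^ n * (B - n)
  have hA : 0 < A := mul_pos (pow_pos (by linarith) n) (by linarith)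
  have hb : 1 ≤ b := by linarith
  have hbA : b ^ n * B ≤ 2 * A :=
    (succ_pow_mul_le_two_mul (by linarith)).trans' <| by gcongr
  have hcA : c * A ≤ (1 + 2 * (2 * n + 1) * b ^ (n + 1)) * A :=
    calc c * A ≤ A + (2 * n + 1) * b ^ (n + 1) * (b ^ n * B) := hc.trans_eq (by ring)
      _ ≤ A + (2 * n + 1) * b ^ (n + 1) * (2 * A) := by gcongr
      _ = (1 + 2 * (2 * n + 1) * b ^ (n + 1)) * A := by ring
  have hb1 : 1 ≤ b ^ (n + 1) := one_le_pow₀ hb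
  calc c ≤ 1 + 2 * (2 * n + 1) * b ^ (n + 1) := le_of_mul_le_mul_right hcA hA
    _ ≤ 4 * ((n : ℝ) + 1) * b ^ (n + 1) := by linarith
    _ ≤ 4 * ((n : ℝ) + 1) * (b + 1) ^ (n + 1) := by
      gcongr
      linarith

end Numerics

section UnitsSubgroup

variable {R : Type*} [CommRing R] [IsDomain R]

theorem card_le_of_forall_sub_pow_eq_one {n t : ℕ} {ν : Fin (n + 1) → R} {b : ℝ}
    (hν : Function.Injective ν) (hn : n ≠ 0) (hb : 4 * (n : ℝ) + 1 ≤ b)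
    (hbt : b ^ (2 * n + 1) = t)
    (hchar : ringChar R = 0 ∨ 4 * (n : ℝ) * t * (b + 1) ≤ ringChar R)
    {S : Finset R} (hS : ∀ x ∈ S, ∀ l, (x - ν l) ^ t = 1) :
    (S.card : ℝ) ≤ 4 * ((n : ℝ) + 1) * (b + 1) ^ (n + 1) := by
  have hn1 : (1 : ℝ) ≤ n := by exact_mod_cast Nat.one_le_iff_ne_zero.2 hn
  have hb0 : 0 < b := by linarith
  have ht : (0 : ℝ) < t := hbt ▸ pow_pos hb0 _
  have hB : 4 * n + 1 ≤ ⌊b⌋₊ := Nat.le_floor (by exact_mod_cast hb)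
  have hBb : (⌊b⌋₊ : ℝ) ≤ b := Nat.floor_le hb0.le
  have hBt : ⌊b⌋₊ ^ (2 * n + 1) ≤ t := by
    have : (⌊b⌋₊ : ℝ) ^ (2 * n + 1) ≤ t := hbt ▸ by gcongr
    exact_mod_cast this
  have hdegree : (t * (n * ⌊b⌋₊ + 1) : ℝ) < 4 * n * t * (b + 1) :=
    calc (t * (n * ⌊b⌋₊ + 1) : ℝ) ≤ t * (n * b + n) := by gcongr
      _ < 4 * (t * (n * b + n)) := by linarith [show 0 < t * (n * b + n) by positivity]
      _ = 4 * n * t * (b + 1) := by ring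
  have hfactorial : ((t * (n * ⌊b⌋₊ + 1))! : R) ≠ 0 :=
    natCast_factorial_ne_zero_of_lt_ringChar <| hchar.imp_right fun h => by
      exact_mod_cast hdegree.trans_le h
  refine le_four_mul_add_one_pow_of_mul_le hB hBb (Nat.lt_floor_add_one b).le ?_
  have hcard := card_mul_le_of_forall_sub_pow_eq_one hν hn (by omega) hBt hfactorial hS
  rw [hbt, ← Nat.cast_sub (by omega)]
  exact_mod_cast hcard

theorem val_pow_card_eq_one {M : Type*} [Monoid M] {Γ : Subgroup Mˣ} {γ : Mˣ} (hγ : γ ∈ Γ) :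
    (γ : M) ^ Nat.card Γ = 1 := by
  rw [← Units.val_pow_eq_pow_val, orderOf_dvd_iff_pow_eq_one.1 (Γ.orderOf_dvd_natCard hγ),
    Units.val_one]

theorem shkredov_vyugin_general (n : ℕ) (hn : n ≠ 0)
    (Γ : Subgroup Rˣ) (μ : Fin n → R) (hμ : Function.Injective μ) (hμ0 : ∀ i, μ i ≠ 0)
    (hΓ : (4 * (n : ℝ) + 1) ^ (2 * n + 1) ≤ Nat.card Γ)
    (hchar : ringChar R = 0 ∨ 4 * (n : ℝ) * (Nat.card Γ : ℝ) *
        ((Nat.card Γ : ℝ) ^ ((1 : ℝ) / (2 * (n : ℝ) + 1)) + 1) ≤ ringChar R) :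
    (Nat.card {x : R | (∃ γ ∈ Γ, x = (γ : Rˣ)) ∧
        ∀ i : Fin n, ∃ γ ∈ Γ, x = ((γ : Rˣ) : R) + μ i} : ℝ) ≤
      4 * ((n : ℝ) + 1) *
        ((Nat.card Γ : ℝ) ^ ((1 : ℝ) / (2 * (n : ℝ) + 1)) + 1) ^ (n + 1) := by
  set b := (Nat.card Γ : ℝ) ^ ((1 : ℝ) / (2 * (n : ℝ) + 1))
  have hbΓ : b ^ (2 * n + 1) = Nat.card Γ := by
    simpa [b] using Real.rpow_inv_natCast_pow (Nat.card Γ).cast_nonneg (2 * n).succ_ne_zero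
  have hb : 4 * (n : ℝ) + 1 ≤ b :=
    le_of_pow_le_pow_left₀ (2 * n).succ_ne_zero (by positivity) (hΓ.trans_eq hbΓ.symm)
  have hΓfin : Finite Γ := Nat.finite_of_card_ne_zero fun h0 => by
    rw [h0, Nat.cast_zero] at hΓ
    exact hΓ.not_gt (by positivity)
  set S := {x : R | (∃ γ ∈ Γ, x = (γ : Rˣ)) ∧ ∀ i : Fin n, ∃ γ ∈ Γ, x = ((γ : Rˣ) : R) + μ i}
  have hSfin : S.Finite := ((Γ : Set Rˣ).toFinite.image Units.val).subset <| by
    rintro _ ⟨⟨γ, hγ, rfl⟩, -⟩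
    exact ⟨γ, hγ, rfl⟩
  have hν : Function.Injective (Fin.cons 0 μ : Fin (n + 1) → R) :=
    Fin.cons_injective_iff.2 ⟨fun ⟨i, hi⟩ => hμ0 i hi, hμ⟩
  rw [Nat.card_coe_set_eq, Set.ncard_eq_toFinset_card S hSfin]
  refine card_le_of_forall_sub_pow_eq_one hν hn hb hbΓ hchar fun x hx => ?_
  obtain ⟨⟨γ, hγ, hxγ⟩, hxμ⟩ := hSfin.mem_toFinset.1 hx
  refine Fin.cases ?_ fun i => ?_
  · rw [Fin.cons_zero, sub_zero, hxγ, val_pow_card_eq_one hγ]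
  · obtain ⟨δ, hδ, hxδ⟩ := hxμ i
    rw [Fin.cons_succ, hxδ, add_sub_cancel_right, val_pow_card_eq_one hδ]

end UnitsSubgroup

/-- Shkredov–Vyugin: bound on the intersection of a subgroup of `F_p^*`
with `n` pairwise distinct additive shifts of itself. -/
theorem shkredov_vyugin (p n : ℕ) [Fact p.Prime] (hn : 2 ≤ n)
    (Γ : Subgroup (ZMod p)ˣ) (μ : Fin n → (ZMod p)ˣ) (hμ : Function.Injective μ)
    (h1 : 32 * (n : ℝ) * (2 : ℝ) ^ (20 * (n : ℝ) * Real.log ((n : ℝ) + 1)) ≤ Nat.card Γ)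
    (h2 : 4 * (n : ℝ) * (Nat.card Γ : ℝ) *
        ((Nat.card Γ : ℝ) ^ ((1 : ℝ) / (2 * (n : ℝ) + 1)) + 1) ≤ p) :
    (Nat.card {x : ZMod p | (∃ γ ∈ Γ, x = (γ : (ZMod p)ˣ)) ∧
        ∀ i : Fin n, ∃ γ ∈ Γ, x = ((γ : (ZMod p)ˣ) : ZMod p) + (μ i : ZMod p)} : ℝ) ≤
      4 * ((n : ℝ) + 1) *
        ((Nat.card Γ : ℝ) ^ ((1 : ℝ) / (2 * (n : ℝ) + 1)) + 1) ^ (n + 1) :=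
  shkredov_vyugin_general n (by omega) Γ (fun i => μ i) (Units.val_injective.comp hμ)
    (fun i => (μ i).ne_zero) ((four_mul_add_one_pow_le n (by omega)).trans h1)
    (Or.inr (by rwa [ZMod.ringChar_zmod_n]))
end
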